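/- Let m, n, N be natural numbers, let a₀, …, a_N ∈ ℂ, and let f(z) = ∑_{k=0}^{N} a_k·z^k. Then for every z ∈ ℂ, (T_{w ↦ conj(w)^n} f)(z) = ∑_{k=n}^{N} a_k·((k+m)!/(k+m−n)!)·z^{k−n} (the sum being empty, hence 0, when n > N). -/

import Mathlib

/-!
In the Fock–Sobolev weight the monomials are orthogonal: by rotation invariance of area measure
the moment `∫ w^p conj(w)^q |w|^{2m} e^{-|w|²}` vanishes for `p ≠ q`, and for `p = q` it is
`π (p+m)!` by a Gamma integral (`fs_moment`). Expanding the kernel as a power series and integrating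
termwise, `w^k conj(w)^n` only pairs with the term `j = k - n` of the kernel, whose coefficient
`m!/(k-n+m)!` times `π (k+m)!` gives the claimed factor.

Termwise integration is dominated convergence: since `m!/(j+m)! ≤ 1/j!`, the series of norms is at
most `|w|^s e^{-|w|²} e^{|z||w|}`, which is integrable by `fs_integrable_bound`.
-/

open MeasureTheory Complex ComplexOrder

/-- Weight function: `|z|^{2m} e^{-|z|^2}` as a complex number. -/
noncomputable def fsWt (m : ℕ) (z : ℂ) : ℂ :=
  ((‖z‖ : ℝ) : ℂ) ^ (2 * m) * ((Real.exp (-‖z‖ ^ 2) : ℝ) : ℂ)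

/-- Fock–Sobolev reproducing kernel `K_m(z,w)`. -/
noncomputable def fsKernel (m : ℕ) (z w : ℂ) : ℂ :=
  ∑' j : ℕ, ((m.factorial : ℂ) / ((j + m).factorial : ℂ)) * (z * starRingEnd ℂ w) ^ j

/-- Toeplitz operator with symbol `ψ` acting on `f`, evaluated at `z`. -/
noncomputable def fsToeplitz (m : ℕ) (ψ f : ℂ → ℂ) (z : ℂ) : ℂ :=
  (1 / ((Real.pi : ℂ) * (m.factorial : ℂ))) *
    ∫ w : ℂ, ψ w * f w * fsKernel m z w * fsWt m w

/-- Fock–Sobolev pairing `⟨g, h⟩`. -/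
noncomputable def fsPair (m : ℕ) (g h : ℂ → ℂ) : ℂ :=
  ∫ z : ℂ, g z * starRingEnd ℂ (h z) * fsWt m z

/-- `‖g‖² = ⟨g, g⟩`. -/
noncomputable def fsNormSq (m : ℕ) (g : ℂ → ℂ) : ℂ := fsPair m g g

lemma fs_integrable_gauss (s : ℕ) :
    Integrable (fun w : ℂ => ‖w‖ ^ s * Real.exp (-(1 / 2) * ‖w‖ ^ 2)) := by
  have h := Complex.integral_rpow_mul_exp_neg_mul_rpow (p := 2) (q := s) (b := 1 / 2)
    (by norm_num) (by have : (0 : ℝ) ≤ s := by positivity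
                      linarith) (by norm_num)
  simp only [Real.rpow_natCast, Real.rpow_ofNat] at h
  -- A nonzero Bochner integral forces integrability.
  by_contra hn
  rw [integral_undef hn] at h
  have hG : 0 < Real.Gamma (((s : ℝ) + 2) / 2) := Real.Gamma_pos_of_pos (by positivity)
  have : (0 : ℝ) < (2 * Real.pi / 2) * (1 / 2 : ℝ) ^ (-((s : ℝ) + 2) / 2)
      * Real.Gamma (((s : ℝ) + 2) / 2) := by positivity
  linarith

lemma fs_integrable_bound (s : ℕ) (r : ℝ) :
    Integrable (fun w : ℂ => ‖w‖ ^ s * Real.exp (-‖w‖ ^ 2) * Real.exp (r * ‖w‖)) := by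
  refine ((fs_integrable_gauss s).const_mul (Real.exp (r ^ 2 / 2))).mono' ?_ ?_
  · exact Continuous.aestronglyMeasurable (by fun_prop)
  · refine Filter.Eventually.of_forall fun w => ?_
    rw [Real.norm_of_nonneg (by positivity), mul_assoc, ← Real.exp_add, mul_left_comm,
      ← Real.exp_add]
    refine mul_le_mul_of_nonneg_left (Real.exp_le_exp.mpr ?_) (by positivity)
    -- Completing the square.
    nlinarith [sq_nonneg (r - ‖w‖)]

lemma fs_norm_wt (m : ℕ) (w : ℂ) : ‖fsWt m w‖ = ‖w‖ ^ (2 * m) * Real.exp (-‖w‖ ^ 2) := by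
  rw [fsWt, norm_mul, norm_pow, Complex.norm_real, Complex.norm_real, norm_norm,
    Real.norm_of_nonneg (Real.exp_pos _).le]

lemma fs_continuous_wt (m : ℕ) : Continuous (fsWt m) := by
  unfold fsWt
  fun_prop

lemma fs_integrable_monomial (m p q : ℕ) :
    Integrable (fun w : ℂ => w ^ p * starRingEnd ℂ w ^ q * fsWt m w) := by
  have hc := fs_continuous_wt m
  refine (fs_integrable_bound (p + q + 2 * m) 0).mono' ?_ ?_
  · exact Continuous.aestronglyMeasurable (by fun_prop)
  · refine Filter.Eventually.of_forall fun w => le_of_eq ?_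
    rw [norm_mul, norm_mul, norm_pow, norm_pow, RCLike.norm_conj, fs_norm_wt]
    simp only [zero_mul, Real.exp_zero]
    ring

/-- Off-diagonal moments vanish: the rotation by `π/(p-q)` multiplies the integrand by `-1`. -/
lemma fs_moment_ne (m p q : ℕ) (h : p ≠ q) :
    ∫ w : ℂ, w ^ p * starRingEnd ℂ w ^ q * fsWt m w = 0 := by
  set t : ℝ := Real.pi / ((p : ℝ) - q) with ht
  have hpq : (p : ℝ) - q ≠ 0 := sub_ne_zero.mpr (by exact_mod_cast h)
  set c : Circle := Circle.exp t with hc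
  have hmp := (rotation c).measurePreserving.integral_comp
    (rotation c).toHomeomorph.measurableEmbedding
    (fun w : ℂ => w ^ p * starRingEnd ℂ w ^ q * fsWt m w)
  have hcc : (c : ℂ) ^ p * starRingEnd ℂ (c : ℂ) ^ q = -1 := by
    rw [hc, Circle.coe_exp, ← Complex.exp_conj, ← Complex.exp_nat_mul, ← Complex.exp_nat_mul,
      ← Complex.exp_add, ← Complex.exp_pi_mul_I]
    congr 1
    have hpt : (Real.pi : ℂ) = ((p : ℂ) - q) * t := by
      rw [ht]
      have : ((p : ℂ) - q) ≠ 0 := by exact_mod_cast hpq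
      push_cast
      field_simp
    rw [hpt, map_mul, Complex.conj_ofReal, Complex.conj_I]
    ring
  have hneg : ∀ w : ℂ, (rotation c w) ^ p * starRingEnd ℂ (rotation c w) ^ q
      * fsWt m (rotation c w) = -(w ^ p * starRingEnd ℂ w ^ q * fsWt m w) := by
    intro w
    have hw : fsWt m (rotation c w) = fsWt m w := by
      rw [fsWt, fsWt, LinearIsometryEquiv.norm_map]
    rw [hw, rotation_apply, map_mul, mul_pow, mul_pow]
    linear_combination (w ^ p * starRingEnd ℂ w ^ q * fsWt m w) * hcc
  simp only [hneg, integral_neg] at hmp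
  exact self_eq_neg.mp hmp.symm

lemma fs_moment_eq (m p : ℕ) :
    ∫ w : ℂ, w ^ p * starRingEnd ℂ w ^ p * fsWt m w = Real.pi * ((p + m).factorial : ℂ) := by
  have h := Complex.integral_rpow_mul_exp_neg_rpow (p := 2) (q := ((2 * (p + m) : ℕ) : ℝ))
    (by norm_num) (by have : (0 : ℝ) ≤ ((2 * (p + m) : ℕ) : ℝ) := by positivity
                      linarith)
  simp only [Real.rpow_natCast, Real.rpow_ofNat] at h
  have hG : (((2 * (p + m) : ℕ) : ℝ) + 2) / 2 = ((p + m : ℕ) : ℝ) + 1 := by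
    push_cast
    ring
  rw [hG, Real.Gamma_nat_eq_factorial] at h
  have hw : ∀ w : ℂ, w ^ p * starRingEnd ℂ w ^ p * fsWt m w
      = ((‖w‖ ^ (2 * (p + m)) * Real.exp (-‖w‖ ^ 2) : ℝ) : ℂ) := by
    intro w
    rw [← mul_pow, Complex.mul_conj', fsWt]
    push_cast
    ring
  simp only [hw]
  rw [integral_complex_ofReal, h]
  push_cast
  ring

lemma fs_moment (m p q : ℕ) :
    ∫ w : ℂ, w ^ p * starRingEnd ℂ w ^ q * fsWt m w
      = if p = q then Real.pi * ((p + m).factorial : ℂ) else 0 := by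
  split_ifs with h
  · subst h
    exact fs_moment_eq m p
  · exact fs_moment_ne m p q h

lemma fs_coeff_le (m j : ℕ) :
    ‖(m.factorial : ℂ) / ((j + m).factorial : ℂ)‖ ≤ 1 / (j.factorial : ℝ) := by
  rw [norm_div, Complex.norm_natCast, Complex.norm_natCast,
    div_le_div_iff₀ (by positivity) (by positivity)]
  have := Nat.le_of_dvd (Nat.factorial_pos _) (Nat.factorial_mul_factorial_dvd_factorial_add j m)
  rw [one_mul, mul_comm]
  exact_mod_cast this

lemma fs_kernel_term_le (m j : ℕ) (z w : ℂ) :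
    ‖((m.factorial : ℂ) / ((j + m).factorial : ℂ)) * (z * starRingEnd ℂ w) ^ j‖
      ≤ (‖z‖ * ‖w‖) ^ j / (j.factorial : ℝ) := by
  rw [norm_mul, norm_pow, norm_mul, RCLike.norm_conj, ← one_div_mul_eq_div (j.factorial : ℝ)]
  exact mul_le_mul_of_nonneg_right (fs_coeff_le m j) (by positivity)

lemma fs_kernel_hasSum (m : ℕ) (z w : ℂ) :
    HasSum (fun j : ℕ => ((m.factorial : ℂ) / ((j + m).factorial : ℂ))
      * (z * starRingEnd ℂ w) ^ j) (fsKernel m z w) :=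
  (Summable.of_norm_bounded (Real.summable_pow_div_factorial (‖z‖ * ‖w‖))
    fun j => fs_kernel_term_le m j z w).hasSum

lemma fs_hasSum_exp (x : ℝ) : HasSum (fun j : ℕ => x ^ j / (j.factorial : ℝ)) (Real.exp x) := by
  rw [Real.exp_eq_exp_ℝ]
  exact NormedSpace.expSeries_div_hasSum_exp x

/-- Termwise integration of the kernel series against a polynomial. -/
lemma fs_hasSum_integral (m n N : ℕ) (a : ℕ → ℂ) (z : ℂ) :
    HasSum (fun j : ℕ => ∫ w : ℂ, starRingEnd ℂ w ^ n
        * (∑ k ∈ Finset.range (N + 1), a k * w ^ k)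
        * (((m.factorial : ℂ) / ((j + m).factorial : ℂ)) * (z * starRingEnd ℂ w) ^ j) * fsWt m w)
      (∫ w : ℂ, starRingEnd ℂ w ^ n * (∑ k ∈ Finset.range (N + 1), a k * w ^ k)
        * fsKernel m z w * fsWt m w) := by
  have hcw := fs_continuous_wt m
  set P : ℂ → ℝ := fun w => ‖w‖ ^ n * (∑ k ∈ Finset.range (N + 1), ‖a k‖ * ‖w‖ ^ k)
    * (‖w‖ ^ (2 * m) * Real.exp (-‖w‖ ^ 2)) with hP
  have hsum : ∀ w, HasSum (fun j : ℕ => P w * ((‖z‖ * ‖w‖) ^ j / (j.factorial : ℝ)))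
      (P w * Real.exp (‖z‖ * ‖w‖)) := fun w => (fs_hasSum_exp _).mul_left _
  refine hasSum_integral_of_dominated_convergence
    (fun j w => P w * ((‖z‖ * ‖w‖) ^ j / (j.factorial : ℝ))) ?_ ?_ ?_ ?_ ?_
  · intro j
    exact Continuous.aestronglyMeasurable (by fun_prop)
  · intro j
    refine Filter.Eventually.of_forall fun w => ?_
    rw [mul_right_comm, norm_mul, norm_mul, norm_mul, norm_pow, RCLike.norm_conj, fs_norm_wt]
    refine mul_le_mul ?_ (fs_kernel_term_le m j z w) (norm_nonneg _) (by positivity)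
    rw [hP]
    dsimp only
    gcongr
    refine (norm_sum_le _ _).trans_eq (Finset.sum_congr rfl fun k _ => ?_)
    rw [norm_mul, norm_pow]
  · exact Filter.Eventually.of_forall fun w => (hsum w).summable
  · simp only [fun w => (hsum w).tsum_eq]
    have : (fun w => P w * Real.exp (‖z‖ * ‖w‖)) = fun w : ℂ => ∑ k ∈ Finset.range (N + 1),
        ‖a k‖ * (‖w‖ ^ (n + k + 2 * m) * Real.exp (-‖w‖ ^ 2) * Real.exp (‖z‖ * ‖w‖)) := by
      funext w
      simp only [hP, Finset.mul_sum, Finset.sum_mul]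
      refine Finset.sum_congr rfl fun k _ => ?_
      ring
    rw [this]
    exact integrable_finsetSum _ fun k _ => (fs_integrable_bound _ _).const_mul _
  · exact Filter.Eventually.of_forall fun w =>
      ((fs_kernel_hasSum m z w).mul_left _).mul_right _

lemma fs_integral_term (m n N j : ℕ) (a : ℕ → ℂ) (z : ℂ) :
    ∫ w : ℂ, starRingEnd ℂ w ^ n * (∑ k ∈ Finset.range (N + 1), a k * w ^ k)
        * (((m.factorial : ℂ) / ((j + m).factorial : ℂ)) * (z * starRingEnd ℂ w) ^ j) * fsWt m w
      = ∑ k ∈ Finset.range (N + 1), a k * ((m.factorial : ℂ) / ((j + m).factorial : ℂ)) * z ^ j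
        * (if k = n + j then Real.pi * ((k + m).factorial : ℂ) else 0) := by
  have : ∀ w : ℂ, starRingEnd ℂ w ^ n * (∑ k ∈ Finset.range (N + 1), a k * w ^ k)
        * (((m.factorial : ℂ) / ((j + m).factorial : ℂ)) * (z * starRingEnd ℂ w) ^ j) * fsWt m w
      = ∑ k ∈ Finset.range (N + 1), a k * ((m.factorial : ℂ) / ((j + m).factorial : ℂ)) * z ^ j
        * (w ^ k * starRingEnd ℂ w ^ (n + j) * fsWt m w) := by
    intro w
    simp only [Finset.mul_sum, Finset.sum_mul]
    refine Finset.sum_congr rfl fun k _ => ?_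
    ring
  simp only [this]
  rw [integral_finsetSum _ fun k _ => (fs_integrable_monomial m k (n + j)).const_mul _]
  refine Finset.sum_congr rfl fun k _ => ?_
  rw [integral_const_mul, fs_moment]

theorem stmt9 (m n N : ℕ) (a : ℕ → ℂ) (f : ℂ → ℂ)
    (hf : f = fun z => ∑ k ∈ Finset.range (N + 1), a k * z ^ k) :
    ∀ z : ℂ, fsToeplitz m (fun w => (starRingEnd ℂ w) ^ n) f z =
      ∑ k ∈ Finset.Icc n N,
        a k * (((k + m).factorial : ℂ) / ((k + m - n).factorial : ℂ)) * z ^ (k - n) := by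
  intro z
  subst hf
  have h1 := fs_hasSum_integral m n N a z
  simp only [fs_integral_term] at h1
  -- For fixed `k` at most one index `j` contributes, namely `j = k - n` when `n ≤ k`.
  have h2 : HasSum (fun j : ℕ => ∑ k ∈ Finset.range (N + 1),
      a k * ((m.factorial : ℂ) / ((j + m).factorial : ℂ)) * z ^ j
        * (if k = n + j then Real.pi * ((k + m).factorial : ℂ) else 0))
      (∑ k ∈ Finset.range (N + 1), if n ≤ k then
        a k * ((m.factorial : ℂ) / ((k + m - n).factorial : ℂ)) * z ^ (k - n)
          * (Real.pi * ((k + m).factorial : ℂ)) else 0) := by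
    refine hasSum_sum fun k _ => ?_
    split_ifs with hk
    · have h := hasSum_single (f := fun j : ℕ =>
        a k * ((m.factorial : ℂ) / ((j + m).factorial : ℂ)) * z ^ j
          * (if k = n + j then Real.pi * ((k + m).factorial : ℂ) else 0)) (k - n) (by
        intro j hj
        rw [if_neg (by omega), mul_zero])
      rwa [if_pos (by omega), show k - n + m = k + m - n by omega] at h
    · convert! hasSum_zero using 2 with j
      rw [if_neg (by omega), mul_zero]
  have hset : (Finset.range (N + 1)).filter (fun k => n ≤ k) = Finset.Icc n N := by
    ext k
    simp only [Finset.mem_filter, Finset.mem_range, Finset.mem_Icc]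
    omega
  rw [fsToeplitz, h1.unique h2, ← Finset.sum_filter, hset, Finset.mul_sum]
  refine Finset.sum_congr rfl fun k _ => ?_
  have hpi : (Real.pi : ℂ) ≠ 0 := by exact_mod_cast Real.pi_ne_zero
  have hm : (m.factorial : ℂ) ≠ 0 := by exact_mod_cast m.factorial_ne_zero
  field_simp
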